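/- Let H²_β be the weighted Hardy space induced by a weight sequence w = (w_k)_{k≥1} with w_k → 1, let φ_{z₀}(z) = (z₀ − z)/(1 − conj(z₀)z) for z₀ ∈ 𝔻, and write 𝔉 = {φ_{z₀}^n}_{n≥0}. Then the following are equivalent: (1) C_{φ_{z₀}} is a bounded operator on H²_β; (2) C_{φ_{z₀}} is a bounded invertible operator on H²_β; (3) the sequence (φ_{z₀}^n/β_n)_{n≥0} is a Riesz basis of H²_β; (4) the sequence (β_n · φ_{z₀}^n)_{n≥0} is a Riesz basis of H²_{β⁻¹}; (5) C_{φ_{z₀}} is a bounded invertible operator on H²_{β⁻¹}; (6) C_{φ_{z₀}} is a bounded operator on H²_{β⁻¹}. -/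

import Mathlib

noncomputable section

open Complex Filter Topology

/-- The sequence-space (ℓ²) model of a weighted Hardy space `H²_β`.
An element `a : H2` represents the analytic function whose `k`-th Taylor
coefficient is `a k / β k` (so that `‖a‖` is exactly the `H²_β`-norm). -/
abbrev H2 : Type := lp (fun _ : ℕ => ℂ) 2

/-- The direct sum (ℓ²-sense) of `m` copies of `H2`. -/
abbrev Hm (m : ℕ) : Type := PiLp 2 (fun _ : Fin m => H2)

/-- The open unit disk 𝔻 ⊆ ℂ. -/
def unitDisk : Set ℂ := Metric.ball 0 1

/-- `β_0 = 1` and `β_k = ∏_{j=1}^k w_j`. -/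
def betaSeq (w : ℕ → ℝ) (k : ℕ) : ℝ := ∏ j ∈ Finset.Icc 1 k, w j

/-- The analytic function on 𝔻 represented by the vector `a` in the model of `H²_β`:
`f(z) = ∑_k (a k / β k) z^k`. -/
def repFun (β : ℕ → ℝ) (a : H2) (z : ℂ) : ℂ := ∑' k, (a k / (β k : ℂ)) * z ^ k

/-- `T` is (the ℓ²-model of) the multiplication operator `M_g` on `H²_β`.
Existence of such a `T` says precisely that `M_g` is bounded on `H²_β`. -/
def RepMul (β : ℕ → ℝ) (g : ℂ → ℂ) (T : H2 →L[ℂ] H2) : Prop :=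
  ∀ a : H2, ∀ z ∈ unitDisk, repFun β (T a) z = g z * repFun β a z

/-- `T` is (the ℓ²-model of) the composition operator `C_ψ` on `H²_β`.
Existence of such a `T` says precisely that `C_ψ` is bounded on `H²_β`. -/
def RepComp (β : ℕ → ℝ) (ψ : ℂ → ℂ) (T : H2 →L[ℂ] H2) : Prop :=
  ∀ a : H2, ∀ z ∈ unitDisk, repFun β (T a) z = repFun β a (ψ z)

/-- The Möbius factor `φ_{z₀}(z) = (z₀ - z)/(1 - conj z₀ · z)`. -/
def mobius (z₀ z : ℂ) : ℂ := (z₀ - z) / (1 - (starRingEnd ℂ) z₀ * z)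

/-- `φ` belongs to `Aut(𝔻)`, i.e. `φ(z) = e^{iθ}(z₀ - z)/(1 - conj z₀ · z)`. -/
def IsDiskAut (φ : ℂ → ℂ) : Prop :=
  ∃ (θ : ℝ) (z₀ : ℂ), z₀ ∈ unitDisk ∧
    ∀ z, φ z = Complex.exp (θ * Complex.I) * mobius z₀ z

/-- `B` is a finite Blaschke product of order `m`. -/
def IsBlaschke (m : ℕ) (B : ℂ → ℂ) : Prop :=
  ∃ (θ : ℝ) (zs : Fin m → ℂ), (∀ j, zs j ∈ unitDisk) ∧
    ∀ z, B z = Complex.exp (θ * Complex.I) * ∏ j, mobius (zs j) z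

/-- `w` is a positive weight sequence tending to `1` such that the weighted Hardy
space `H²_β` is of polynomial growth: `sup_k (k+1)|w_k - 1| < ∞`. -/
def PolyGrowth (w : ℕ → ℝ) : Prop :=
  (∀ k, 1 ≤ k → 0 < w k) ∧ Tendsto w atTop (nhds 1) ∧
    ∃ M : ℝ, ∀ k : ℕ, 1 ≤ k → ((k : ℝ) + 1) * |w k - 1| ≤ M

/-- `f` is analytic on an open neighbourhood of the closed unit disk. -/
def AnalyticOnClosedDisk (f : ℂ → ℂ) : Prop :=
  ∃ U : Set ℂ, IsOpen U ∧ Metric.closedBall (0:ℂ) 1 ⊆ U ∧ AnalyticOnNhd ℂ f U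

/-- A family in `H2` is a Riesz basis if some bounded invertible operator maps it
to an orthonormal basis. -/
def RieszBasis {ι : Type} (x : ι → H2) : Prop :=
  ∃ V : H2 ≃L[ℂ] H2, Orthonormal ℂ (fun i => V (x i)) ∧
    (Submodule.span ℂ (Set.range fun i => V (x i))).topologicalClosure = ⊤


/-- admissible weights -/
def GoodW (β : ℕ → ℝ) : Prop :=
  (∀ k, 0 < β k) ∧ Tendsto (fun k => β (k+1) / β k) atTop (nhds 1)

lemma GoodW.inv {β : ℕ → ℝ} (h : GoodW β) : GoodW (fun k => (β k)⁻¹) := by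
  refine ⟨fun k => inv_pos.2 (h.1 k), ?_⟩
  have := h.2.inv₀ one_ne_zero
  rw [inv_one] at this
  refine this.congr fun k => ?_
  have h1 := (h.1 k).ne'
  have h2 := (h.1 (k+1)).ne'
  field_simp

lemma goodW_betaSeq (w : ℕ → ℝ) (hpos : ∀ k, 1 ≤ k → 0 < w k)
    (hlim : Tendsto w atTop (nhds 1)) : GoodW (betaSeq w) := by
  have hp : ∀ k, 0 < betaSeq w k := fun k =>
    Finset.prod_pos fun j hj => hpos j (Finset.mem_Icc.1 hj).1
  refine ⟨hp, ?_⟩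
  refine ((tendsto_add_atTop_iff_nat 1).2 hlim).congr fun k => ?_
  have : betaSeq w (k+1) = betaSeq w k * w (k+1) := by
    unfold betaSeq
    rw [Finset.prod_Icc_succ_top (by omega)]
  rw [this, mul_div_cancel_left₀ _ (hp k).ne']

lemma kern_mem {β : ℕ → ℝ} (h : GoodW β) {z : ℂ} (hz : z ∈ unitDisk) :
    Memℓp (fun k : ℕ => ((starRingEnd ℂ) z) ^ k / (β k : ℂ)) 2 := by
  have hz1 : ‖z‖ < 1 := by simpa [unitDisk] using hz
  apply memℓp_gen
  have e : ∀ k : ℕ, ‖((starRingEnd ℂ) z) ^ k / (β k : ℂ)‖ ^ (2 : ENNReal).toReal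
      = (‖z‖ ^ k / β k) ^ 2 := by
    intro k
    simp [abs_of_pos (h.1 k)]
  simp_rw [e]
  have hl : Tendsto (fun k => (‖z‖ * (β (k+1) / β k)⁻¹) ^ 2) atTop (nhds (‖z‖^2)) := by
    simpa using ((h.2.inv₀ one_ne_zero).const_mul ‖z‖).pow 2
  have hz2 : ‖z‖ ^ 2 < 1 := by
    have := norm_nonneg z
    nlinarith
  obtain ⟨r, hr1, hr2⟩ := exists_between hz2
  refine summable_of_ratio_norm_eventually_le hr2 ?_
  filter_upwards [hl.eventually (gt_mem_nhds hr1)] with k hk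
  have h1 := (h.1 k).ne'
  have h2 := (h.1 (k+1)).ne'
  rw [Real.norm_of_nonneg (sq_nonneg _), Real.norm_of_nonneg (sq_nonneg _)]
  have : (‖z‖ ^ (k+1) / β (k+1)) ^ 2
      = (‖z‖ * (β (k+1) / β k)⁻¹) ^ 2 * (‖z‖ ^ k / β k) ^ 2 := by
    field_simp
    ring
  rw [this]
  exact mul_le_mul_of_nonneg_right hk.le (sq_nonneg _)

/-- kernel vector -/
def kern {β : ℕ → ℝ} (h : GoodW β) {z : ℂ} (hz : z ∈ unitDisk) : H2 :=
  ⟨_, kern_mem h hz⟩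

lemma hasSum_repFun {β : ℕ → ℝ} (h : GoodW β) {z : ℂ} (hz : z ∈ unitDisk) (a : H2) :
    HasSum (fun k => (a k / (β k : ℂ)) * z ^ k) (inner ℂ (kern h hz) a) := by
  refine (lp.hasSum_inner (kern h hz) a).congr_fun ?_
  intro k
  simp [kern]
  ring

lemma repFun_eq {β : ℕ → ℝ} (h : GoodW β) {z : ℂ} (hz : z ∈ unitDisk) (a : H2) :
    repFun β a z = inner ℂ (kern h hz) a :=
  (hasSum_repFun h hz a).tsum_eq

lemma repFun_inj {β : ℕ → ℝ} (h : GoodW β) {a b : H2}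
    (hab : ∀ z ∈ unitDisk, repFun β a z = repFun β b z) : a = b := by
  have key : ∀ c : H2, HasFPowerSeriesAt (repFun β c)
      (FormalMultilinearSeries.ofScalars ℂ (fun k => c k / (β k : ℂ))) 0 := by
    intro c
    rw [hasFPowerSeriesAt_iff]
    filter_upwards [Metric.ball_mem_nhds (0:ℂ) one_pos] with z hz
    have := hasSum_repFun h hz c
    rw [← repFun_eq h hz] at this
    simpa [mul_comm] using this
  have e := (key a).eq_formalMultilinearSeries_of_eventually (key b)
    (by filter_upwards [Metric.ball_mem_nhds (0:ℂ) one_pos] with z hz using hab z hz)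
  ext k
  have e2 := congrArg (fun p => FormalMultilinearSeries.coeff p k) e
  have h1 : (β k : ℂ) ≠ 0 := by exact_mod_cast (h.1 k).ne'
  simp only [FormalMultilinearSeries.coeff_ofScalars] at e2
  exact (div_left_inj' h1).1 e2

lemma mobius_mem {z₀ z : ℂ} (h0 : z₀ ∈ unitDisk) (hz : z ∈ unitDisk) :
    mobius z₀ z ∈ unitDisk ∧ 1 - (starRingEnd ℂ) z₀ * z ≠ 0 := by
  have h0' : ‖z₀‖ < 1 := by simpa [unitDisk] using h0
  have hz' : ‖z‖ < 1 := by simpa [unitDisk] using hz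
  have hne : 1 - (starRingEnd ℂ) z₀ * z ≠ 0 := by
    intro hh
    have : (1:ℂ) = (starRingEnd ℂ) z₀ * z := sub_eq_zero.1 hh
    have h2 := congrArg norm this
    rw [norm_one, norm_mul, RCLike.norm_conj] at h2
    nlinarith [norm_nonneg z, norm_nonneg z₀]
  refine ⟨?_, hne⟩
  have : ‖mobius z₀ z‖ < 1 := by
    unfold mobius
    rw [norm_div, div_lt_one (norm_pos_iff.2 hne)]
    refine lt_of_pow_lt_pow_left₀ 2 (norm_nonneg _) ?_
    have e0 : ‖z₀‖^2 < 1 := by nlinarith [norm_nonneg z₀]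
    have e1 : ‖z‖^2 < 1 := by nlinarith [norm_nonneg z]
    rw [Complex.sq_norm, Complex.normSq_apply] at *
    rw [Complex.sq_norm, Complex.normSq_apply]
    simp at *
    nlinarith
  simpa [unitDisk] using this

lemma one_sub_normSq_ne {z₀ : ℂ} (h0 : z₀ ∈ unitDisk) :
    1 - (starRingEnd ℂ) z₀ * z₀ ≠ 0 := (mobius_mem h0 h0).2

lemma mobius_mobius {z₀ z : ℂ} (h0 : z₀ ∈ unitDisk) (hz : z ∈ unitDisk) :
    mobius z₀ (mobius z₀ z) = z := by
  have h1 := (mobius_mem h0 hz).2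
  have h2 := (mobius_mem h0 (mobius_mem h0 hz).1).2
  have h3 := one_sub_normSq_ne h0
  rw [mobius, div_eq_iff h2]
  have hD : mobius z₀ z * (1 - (starRingEnd ℂ) z₀ * z) = z₀ - z := div_mul_cancel₀ _ h1
  apply mul_right_cancel₀ h1
  linear_combination (-1 + z * (starRingEnd ℂ) z₀) * hD

lemma exists_shift {β : ℕ → ℝ} (h : GoodW β) :
    ∃ S : H2 →L[ℂ] H2, RepMul β (fun z => z) S := by
  obtain ⟨C, hC⟩ := h.2.bddAbove_range
  have hC' : ∀ k, β (k+1) / β k ≤ C := fun k => hC ⟨k, rfl⟩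
  have hC0 : 0 ≤ C := le_trans (div_nonneg (h.1 1).le (h.1 0).le) (hC' 0)
  let s : (ℕ → ℂ) → ℕ → ℂ := fun a k =>
    Nat.casesOn k 0 (fun j => ((β (j+1) / β j : ℝ) : ℂ) * a j)
  have s0 : ∀ a, s a 0 = 0 := fun a => rfl
  have s1 : ∀ a j, s a (j+1) = ((β (j+1) / β j : ℝ) : ℂ) * a j := fun a j => rfl
  have two : (2 : ENNReal).toReal = 2 := by norm_num
  have pt : (0:ℝ) < (2 : ENNReal).toReal := by norm_num
  have le : ∀ a : H2, ∀ j, ‖s a (j+1)‖ ^ (2 : ENNReal).toReal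
      ≤ C ^ 2 * ‖a j‖ ^ (2 : ENNReal).toReal := by
    intro a j
    rw [s1, two, Real.rpow_two, Real.rpow_two, norm_mul, mul_pow, Complex.norm_real,
      Real.norm_of_nonneg (div_nonneg (h.1 _).le (h.1 _).le)]
    gcongr
    · exact div_nonneg (h.1 _).le (h.1 _).le
    · exact hC' j
  have sm : ∀ a : H2, Summable fun j => C ^ 2 * ‖a j‖ ^ (2 : ENNReal).toReal := fun a =>
    ((lp.memℓp a).summable pt).mul_left _
  have sms : ∀ a : H2, Summable fun j => ‖s a (j+1)‖ ^ (2 : ENNReal).toReal := fun a =>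
    Summable.of_nonneg_of_le (fun j => by positivity) (le a) (sm a)
  have full : ∀ a : H2, Summable fun j => ‖s a j‖ ^ (2 : ENNReal).toReal := fun a =>
    (summable_nat_add_iff (f := fun j => ‖s a j‖ ^ (2 : ENNReal).toReal) 1).1 (sms a)
  have mem : ∀ a : H2, Memℓp (s a) 2 := fun a => by
    apply memℓp_gen
    exact full a
  let L : H2 →ₗ[ℂ] H2 :=
    { toFun := fun a => ⟨s a, mem a⟩
      map_add' := by
        intro a b
        ext k
        cases k with
        | zero =>
          change (0:ℂ) = 0 + 0
          simp
        | succ j =>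
          change ((β (j+1) / β j : ℝ) : ℂ) * (a j + b j) =
            ((β (j+1) / β j : ℝ) : ℂ) * a j + ((β (j+1) / β j : ℝ) : ℂ) * b j
          ring
      map_smul' := by
        intro c a
        ext k
        cases k with
        | zero =>
          change (0:ℂ) = c * 0
          simp
        | succ j =>
          change ((β (j+1) / β j : ℝ) : ℂ) * (c * a j) = c * (((β (j+1) / β j : ℝ) : ℂ) * a j)
          ring }
  have Lc : ∀ a k, (L a) k = s a k := fun a k => rfl
  have bd : ∀ a, ‖L a‖ ≤ C * ‖a‖ := by
    intro a
    apply lp.norm_le_of_tsum_le pt (mul_nonneg hC0 (norm_nonneg _))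
    simp_rw [Lc]
    rw [(full a).tsum_eq_zero_add]
    rw [s0, norm_zero, Real.zero_rpow pt.ne', zero_add]
    refine ((sms a).tsum_le_tsum (le a) (sm a)).trans ?_
    rw [tsum_mul_left, ← lp.norm_rpow_eq_tsum pt, Real.mul_rpow hC0 (norm_nonneg _), two,
      Real.rpow_two]
    simp
  refine ⟨L.mkContinuous C bd, ?_⟩
  · intro a z hz
    rw [LinearMap.mkContinuous_apply]
    have hs := (hasSum_repFun h hz (L a)).summable
    unfold repFun
    rw [hs.tsum_eq_zero_add, ← tsum_mul_left]
    simp only [Lc, s0, s1]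
    rw [zero_div, zero_mul, zero_add]
    refine tsum_congr fun k => ?_
    have h1 : (β k : ℂ) ≠ 0 := by exact_mod_cast (h.1 k).ne'
    have h2 : (β (k+1) : ℂ) ≠ 0 := by exact_mod_cast (h.1 (k+1)).ne'
    push_cast
    field_simp
    ring

lemma exists_mulH {β : ℕ → ℝ} (h : GoodW β) (c : ℂ) :
    ∃ S : H2 →L[ℂ] H2, RepMul β (fun z => 1 - c * z) S := by
  obtain ⟨S, hS⟩ := exists_shift h
  refine ⟨1 - c • S, fun a z hz => ?_⟩
  have := hS a z hz
  simp only [repFun_eq h hz] at this ⊢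
  simp only [sub_apply, one_apply_eq_self,
    smul_apply, inner_sub_right, inner_smul_right, this]
  ring

lemma kern_dense {β : ℕ → ℝ} (h : GoodW β) :
    Dense (Submodule.span ℂ (Set.range fun z : unitDisk => kern h z.2) : Set H2) := by
  rw [Submodule.dense_iff_topologicalClosure_eq_top, Submodule.topologicalClosure_eq_top_iff,
    Submodule.eq_bot_iff]
  intro a ha
  refine repFun_inj h fun z hz => ?_
  rw [repFun_eq h hz, repFun_eq h hz, inner_zero_right]
  exact (Submodule.mem_orthogonal _ _).1 ha _ (Submodule.subset_span ⟨⟨z, hz⟩, rfl⟩)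

lemma kern_congr {β : ℕ → ℝ} (h : GoodW β) {T : H2 →L[ℂ] H2} {c : ℂ} {u v : ℂ}
    (hu : u ∈ unitDisk) (hv : v ∈ unitDisk)
    (hT : ∀ a, repFun β (T a) u = c * repFun β a v) :
    ContinuousLinearMap.adjoint T (kern h hu) = (starRingEnd ℂ) c • kern h hv := by
  refine ext_inner_right ℂ fun a => ?_
  rw [ContinuousLinearMap.adjoint_inner_left, inner_smul_left, ← repFun_eq, ← repFun_eq, hT a]
  simp

lemma repFun_kern_inv {β : ℕ → ℝ} (h : GoodW β) {u z : ℂ} (hu : u ∈ unitDisk)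
    (hz : z ∈ unitDisk) :
    repFun (fun k => (β k)⁻¹) (kern h hu) z = (1 - (starRingEnd ℂ) u * z)⁻¹ := by
  have hu' : ‖u‖ < 1 := by simpa [unitDisk] using hu
  have hz' : ‖z‖ < 1 := by simpa [unitDisk] using hz
  rw [← tsum_geometric_of_norm_lt_one]
  · unfold repFun
    refine tsum_congr fun k => ?_
    have h1 : (β k : ℂ) ≠ 0 := by exact_mod_cast (h.1 k).ne'
    simp [kern, h1, mul_pow]
  · rw [norm_mul, RCLike.norm_conj]
    nlinarith [norm_nonneg z, norm_nonneg u]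

lemma dual_bdd {β : ℕ → ℝ} (h : GoodW β) {z₀ : ℂ} (h0 : z₀ ∈ unitDisk)
    (hT : ∃ T : H2 →L[ℂ] H2, RepComp β (mobius z₀) T) :
    ∃ T : H2 →L[ℂ] H2, RepComp (fun k => (β k)⁻¹) (mobius z₀) T := by
  obtain ⟨T, hT⟩ := hT
  obtain ⟨M, hM⟩ := exists_mulH h ((starRingEnd ℂ) z₀)
  obtain ⟨N, hN⟩ := exists_mulH h.inv ((starRingEnd ℂ) z₀)
  let R : H2 →L[ℂ] H2 := (1 - (starRingEnd ℂ) z₀ * z₀)⁻¹ •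
    (N.comp ((ContinuousLinearMap.adjoint M).comp (ContinuousLinearMap.adjoint T)))
  refine ⟨R, fun a z hz => ?_⟩
  have hφz := (mobius_mem h0 hz).1
  have : (innerSL ℂ (kern h.inv hz)).comp R = innerSL ℂ (kern h.inv hφz) := by
    refine ContinuousLinearMap.ext_on (kern_dense h) ?_
    rintro _ ⟨⟨u, hu⟩, rfl⟩
    have hφu := (mobius_mem h0 hu).1
    simp only [ContinuousLinearMap.comp_apply, innerSL_apply_apply]
    have e1 := kern_congr h (T := T) (c := 1) hu hφu (fun a => by rw [one_mul]; exact hT a u hu)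
    have e2 := kern_congr h (T := M) hφu hφu (fun a => hM a _ hφu)
    have e3 := hN (kern h hφu) z hz
    rw [repFun_kern_inv h hφu hz, repFun_eq h.inv hz] at e3
    have e4 := repFun_kern_inv h hu hφz
    rw [repFun_eq h.inv hφz] at e4
    simp only [R, smul_apply, ContinuousLinearMap.comp_apply, e1, map_one,
      one_smul, e2, map_smul, inner_smul_right, e3, e4]
    have n1 := one_sub_normSq_ne h0
    have n2 := (mobius_mem h0 hz).2
    have n3 := (mobius_mem h0 hu).2
    have n4 := (mobius_mem hu hφz).2
    have n5 := (mobius_mem hφu hz).2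
    have n3' := (map_ne_zero (starRingEnd ℂ)).2 n3
    simp only [map_sub, map_mul, map_one, Complex.conj_conj] at n3'
    apply eq_inv_of_mul_eq_one_left
    have hD : mobius z₀ z * (1 - (starRingEnd ℂ) z₀ * z) = z₀ - z := div_mul_cancel₀ _ n2
    have hm : (starRingEnd ℂ) (mobius z₀ u) * (1 - z₀ * (starRingEnd ℂ) u)
        = (starRingEnd ℂ) z₀ - (starRingEnd ℂ) u := by
      have := congrArg (starRingEnd ℂ)
        (show mobius z₀ u * (1 - (starRingEnd ℂ) z₀ * u) = z₀ - u from div_mul_cancel₀ _ n3)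
      simpa only [map_sub, map_mul, map_one, Complex.conj_conj] using this
    have f1 : 1 - (starRingEnd ℂ) u * mobius z₀ z =
      (1 - (starRingEnd ℂ) z₀ * z - (starRingEnd ℂ) u * (z₀ - z)) /
        (1 - (starRingEnd ℂ) z₀ * z) := by
      rw [eq_div_iff n2]
      linear_combination (-(starRingEnd ℂ) u) * hD
    have f2 : 1 - (starRingEnd ℂ) (mobius z₀ u) * z =
      (1 - (starRingEnd ℂ) z₀ * z - (starRingEnd ℂ) u * (z₀ - z)) /
        (1 - z₀ * (starRingEnd ℂ) u) := by
      rw [eq_div_iff n3']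
      linear_combination (-z) * hm
    have f3 : (starRingEnd ℂ) (1 - (starRingEnd ℂ) z₀ * mobius z₀ u) =
        (1 - (starRingEnd ℂ) z₀ * z₀) / (1 - z₀ * (starRingEnd ℂ) u) := by
      rw [eq_div_iff n3']
      simp only [map_sub, map_mul, map_one, Complex.conj_conj]
      linear_combination (-z₀) * hm
    have n6 : 1 - (starRingEnd ℂ) z₀ * z - (starRingEnd ℂ) u * (z₀ - z) ≠ 0 := by
      intro hh
      rw [hh, zero_div] at f1
      exact n4 f1
    have f3' := f3
    simp only [map_sub, map_mul, map_one, Complex.conj_conj] at f3'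
    simp only [map_sub, map_mul, map_one, Complex.conj_conj, f1, f2, f3']
    generalize 1 - (starRingEnd ℂ) z₀ * z - (starRingEnd ℂ) u * (z₀ - z) = A at *
    generalize 1 - (starRingEnd ℂ) z₀ * z = B at *
    generalize 1 - z₀ * (starRingEnd ℂ) u = C at *
    generalize 1 - (starRingEnd ℂ) z₀ * z₀ = D at *
    field_simp
  have := congrArg (fun L => L a) this
  simpa [repFun_eq h.inv hz, repFun_eq h.inv hφz] using this

lemma repFun_single {β : ℕ → ℝ} (n : ℕ) (z : ℂ) :
    repFun β (lp.single 2 n (1:ℂ)) z = z ^ n / (β n : ℂ) := by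
  unfold repFun
  rw [tsum_eq_single n]
  · simp
    ring
  · intro k hk
    simp [hk]

lemma tfae_aux {β : ℕ → ℝ} (h : GoodW β) {z₀ : ℂ} (h0 : z₀ ∈ unitDisk) :
    List.TFAE
      [ (∃ T : H2 →L[ℂ] H2, RepComp β (mobius z₀) T),
        (∃ X : H2 ≃L[ℂ] H2, RepComp β (mobius z₀) (X : H2 →L[ℂ] H2)),
        (∃ x : ℕ → H2,
          (∀ n : ℕ, ∀ z ∈ unitDisk,
            repFun β (x n) z = mobius z₀ z ^ n / (β n : ℂ)) ∧
          RieszBasis x)] := by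
  tfae_have 1 → 2 := by
    rintro ⟨T, hT⟩
    have hTT : ∀ a, T (T a) = a := fun a => by
      refine repFun_inj h fun z hz => ?_
      rw [hT _ z hz, hT _ _ (mobius_mem h0 hz).1, mobius_mobius h0 hz]
    exact ⟨ContinuousLinearEquiv.equivOfInverse T T hTT hTT, hT⟩
  tfae_have 2 → 3 := by
    rintro ⟨X, hX⟩
    refine ⟨fun n => X (lp.single 2 n 1), fun n z hz => ?_, X.symm, ?_⟩
    · have := hX (lp.single 2 n 1) z hz
      rw [repFun_single] at this
      exact this
    · let b : HilbertBasis ℕ ℂ H2 := HilbertBasis.ofRepr (LinearIsometryEquiv.refl ℂ H2)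
      have hb : (fun i : ℕ => X.symm (X (lp.single 2 i (1:ℂ)))) = b := by
        funext i
        rw [X.symm_apply_apply, ← b.repr_symm_single]
        rfl
      rw [hb]
      exact ⟨b.orthonormal, b.dense_span⟩
  tfae_have 3 → 1 := by
    rintro ⟨x, hx, V, hV1, hV2⟩
    let b := HilbertBasis.mk hV1 hV2.ge
    have hb : ∀ i, b i = V (x i) := fun i => by
      simp only [b, HilbertBasis.coe_mk]
    let U : H2 →L[ℂ] H2 := (b.repr.symm.toContinuousLinearEquiv : H2 →L[ℂ] H2)
    have hU : ∀ a, U a = b.repr.symm a := fun a => rfl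
    let T : H2 →L[ℂ] H2 := (V.symm : H2 →L[ℂ] H2).comp U
    have hTs : ∀ n, T (lp.single 2 n 1) = x n := by
      intro n
      simp only [T, ContinuousLinearMap.comp_apply, hU]
      rw [b.repr_symm_single, hb]
      simp
    refine ⟨T, fun a z hz => ?_⟩
    have hφz := (mobius_mem h0 hz).1
    have : (innerSL ℂ (kern h hz)).comp T = innerSL ℂ (kern h hφz) := by
      refine lp.ext_continuousLinearMap (by norm_num) fun n => ?_
      ext
      have := hx n z hz
      rw [← hTs, ← repFun_single, repFun_eq h hz, repFun_eq h hφz] at this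
      simpa using this
    have := congrArg (fun L => L a) this
    simpa [repFun_eq h hz, repFun_eq h hφz] using this
  tfae_finish

/-- Let `H²_β` come from a weight sequence `w_k → 1` and let
`φ_{z₀}` be a Möbius transformation, `z₀ ∈ 𝔻`.  The following are equivalent:
(1) `C_{φ_{z₀}}` is bounded on `H²_β`; (2) `C_{φ_{z₀}}` is bounded invertible on
`H²_β`; (3) `(φ_{z₀}^n/β_n)` is a Riesz basis of `H²_β`; (4) `(β_n φ_{z₀}^n)` is a
Riesz basis of `H²_{β⁻¹}`; (5) `C_{φ_{z₀}}` is bounded invertible on `H²_{β⁻¹}`;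
(6) `C_{φ_{z₀}}` is bounded on `H²_{β⁻¹}`. -/
theorem statement11 (w : ℕ → ℝ) (hpos : ∀ k, 1 ≤ k → 0 < w k)
    (hlim : Tendsto w atTop (nhds 1))
    (z₀ : ℂ) (hz₀ : z₀ ∈ unitDisk) :
    List.TFAE
      [ (∃ T : H2 →L[ℂ] H2, RepComp (betaSeq w) (mobius z₀) T),
        (∃ X : H2 ≃L[ℂ] H2, RepComp (betaSeq w) (mobius z₀) (X : H2 →L[ℂ] H2)),
        (∃ x : ℕ → H2,
          (∀ n : ℕ, ∀ z ∈ unitDisk,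
            repFun (betaSeq w) (x n) z = mobius z₀ z ^ n / (betaSeq w n : ℂ)) ∧
          RieszBasis x),
        (∃ x : ℕ → H2,
          (∀ n : ℕ, ∀ z ∈ unitDisk,
            repFun (fun k => (betaSeq w k)⁻¹) (x n) z = (betaSeq w n : ℂ) * mobius z₀ z ^ n) ∧
          RieszBasis x),
        (∃ X : H2 ≃L[ℂ] H2, RepComp (fun k => (betaSeq w k)⁻¹) (mobius z₀) (X : H2 →L[ℂ] H2)),
        (∃ T : H2 →L[ℂ] H2, RepComp (fun k => (betaSeq w k)⁻¹) (mobius z₀) T) ] := by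
  have h := goodW_betaSeq w hpos hlim
  have t1 := tfae_aux h hz₀
  have t2 := tfae_aux h.inv hz₀
  have e : ∀ (x : ℕ → H2), (∀ n : ℕ, ∀ z ∈ unitDisk,
      repFun (fun k => (betaSeq w k)⁻¹) (x n) z
        = mobius z₀ z ^ n / (((betaSeq w n)⁻¹ : ℝ) : ℂ)) ↔
      (∀ n : ℕ, ∀ z ∈ unitDisk,
        repFun (fun k => (betaSeq w k)⁻¹) (x n) z = (betaSeq w n : ℂ) * mobius z₀ z ^ n) := by
    intro x
    simp [mul_comm]
  simp only [e] at t2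
  tfae_have 1 ↔ 2 := t1.out 0 1
  tfae_have 1 ↔ 3 := t1.out 0 2
  tfae_have 6 ↔ 5 := t2.out 0 1
  tfae_have 6 ↔ 4 := t2.out 0 2
  tfae_have 1 → 6 := dual_bdd h hz₀
  tfae_have 6 → 1 := by
    intro h6
    simpa using dual_bdd h.inv hz₀ h6
  tfae_finish
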